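/- Assume F satisfies Condition F2 (N₂ acts transitively on x̄, m ≥ 2). Then for each equivariant pointwise clutching map ψ ∈ 𝒜, the subset 𝒜_ψ = {ψ′ ∈ 𝒜 : F/ψ′ ≅ F/ψ as N₂-representations} is homeomorphic to the left coset space Iso_{N₁}(F/ψ) / Iso_{N₂}(F/ψ), where Iso_{N₁}(F/ψ) is the topological group of N₁-equivariant linear automorphisms of F/ψ, Iso_{N₂}(F/ψ) is its subgroup of N₂-equivariant linear automorphisms, and the coset space carries the quotient topology. -/

import Mathlib

/-!
Write `Γ` for the group of automorphisms of the bundle `F`: the invertible `T : V → V` that preserve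
every fiber and commute with `N₂`.  It acts on equivariant pointwise clutching maps by
conjugation, and the proof identifies `𝒜_ψ` with the orbit of `ψ`.

Every clutching map makes each fiber `F j` isomorphic to `F/ψ` (`IsClutch.mkQ_fiber`), so an
isomorphism `F/ψ ≅ F/ψ'` lifts fiber by fiber to some `T ∈ Γ` with `Tψ = ψ'T`
(`exists_unit_of_quotIso`); conversely conjugate maps have isomorphic quotients
(`IsClutch.quotIso_conj`).  Since `N₂` is transitive, `F` is induced from the `N₁`-representation
`F 0 ≅ F/ψ`, so `Γ ≅ Iso_{N₁}(F/ψ)` as topological groups (`extendEnd`, `restrictEnd`).  Under this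
isomorphism the stabilizer of `ψ` becomes `Iso_{N₂}(F/ψ)` (`extendEnd_comm_iff`).

What remains is that the orbit map `T ↦ TψT⁻¹` is open.  As `ψ^m = 1`, it has explicit local
sections: for `T₀ ∈ Γ` and `φ ∈ 𝒜`, the average `(1/m) ∑_k φ^{-k} T₀ ψ^k` is a bundle endomorphism
`T` with `Tψ = φT` (`isBundleEnd_average`, `average_intertwines`).  It depends continuously on `φ` and
equals `T₀` when `φ = T₀ψT₀⁻¹`, so it is invertible for `φ` near `T₀ψT₀⁻¹`.
-/


/-! Setup: a group `N₂` acts on the finite set `x̄ = {x̄_j : j ∈ ℤ/m}`, modelled as a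
`MulAction` of `N₂` on `ZMod m`.  An `N₂`-vector bundle `F` over `x̄` is modelled as a
finite-dimensional complex vector space `V` together with a representation
`ρ : N₂ →* End(V)` and a family of submodules `F j ⊆ V` (the fibers) forming an internal
direct sum decomposition of `V` with `ρ g (F j) = F (g • j)`.  A pointwise preclutching
map, i.e. a family of linear isomorphisms `ψ(x̄_j) : F j → F (j+1)`, is modelled as a
single continuous linear map `Ψ : V → V` restricting to a bijection `F j → F (j+1)` on
each fiber.  For `u ∈ F j`, the iterate `ψ^k u` is then just `Ψ^k u`. -/

noncomputable section
open Function Set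

namespace Clutch

variable {m : ℕ} {N₂ : Type*} [Group N₂] [MulAction N₂ (ZMod m)]
variable {V : Type*} [NormedAddCommGroup V] [NormedSpace ℂ V]

/-- `Ψ` is a pointwise preclutching map with respect to the fibers `F`:
for each `j ∈ ℤ/m` it restricts to a (linear) bijection `F j → F (j+1)`. -/
def IsPreclutch (F : ZMod m → Submodule ℂ V) (Ψ : V →L[ℂ] V) : Prop :=
  ∀ j : ZMod m, Set.BijOn Ψ (F j) (F (j + 1))

/-- `Ψ` is an equivariant pointwise clutching map: it is a pointwise preclutching map
such that (1) `ψ^m = id` on each fiber `F j`, and (2) for every `g ∈ N₂` and `j₁ ∈ ℤ/m`,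
writing `j₂ = g⁻¹ • j₁` and `j₃ = g • (j₂ + 1)`, one has
`ψ^(j₃ - j₁) = g ∘ ψ(x̄_{j₂}) ∘ g⁻¹` on `F j₁` (the exponent `j₃ - j₁ ∈ ℤ/m` is
interpreted via its canonical representative). -/
def IsClutch (ρ : Representation ℂ N₂ V) (F : ZMod m → Submodule ℂ V)
    (Ψ : V →L[ℂ] V) : Prop :=
  IsPreclutch F Ψ ∧
  (∀ j : ZMod m, ∀ u ∈ F j, (Ψ ^ m) u = u) ∧
  (∀ (g : N₂) (j₁ : ZMod m), ∀ u ∈ F j₁,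
    (Ψ ^ ((g • (g⁻¹ • j₁ + 1) - j₁ : ZMod m)).val) u = ρ g (Ψ (ρ g⁻¹ u)))

/-- The subspace of `V` spanned by all vectors `u - ψ(x̄_j) u`, `u ∈ F j`; the quotient
`F/ψ` is `V ⧸ clutchSub F Ψ`. -/
def clutchSub (F : ZMod m → Submodule ℂ V) (Ψ : V →L[ℂ] V) : Submodule ℂ V :=
  Submodule.span ℂ {w : V | ∃ j : ZMod m, ∃ u ∈ F j, w = u - Ψ u}

/-- The quotients `F/ψ` and `F/ψ'` are isomorphic as `N₂`-representations (with respect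
to the induced representations, whose action is characterized by commuting with the
quotient maps). -/
def QuotIso (ρ : Representation ℂ N₂ V) (F : ZMod m → Submodule ℂ V)
    (Ψ Ψ' : V →L[ℂ] V) : Prop :=
  ∃ θ : (V ⧸ clutchSub F Ψ) →ₗ[ℂ] (V ⧸ clutchSub F Ψ'),
    Function.Bijective θ ∧
    ∀ (g : N₂) (v w : V), θ ((clutchSub F Ψ).mkQ v) = (clutchSub F Ψ').mkQ w →
      θ ((clutchSub F Ψ).mkQ (ρ g v)) = (clutchSub F Ψ').mkQ (ρ g w)

end Clutch

open Clutch

namespace Clutch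

variable {N₂ : Type*} [Group N₂]

/-- For a representation `σ` of `N₂` on a (semi)normed space `Q` and a subset `S ⊆ N₂`,
the topological group of invertible continuous linear maps of `Q` commuting with `σ g`
for all `g ∈ S`, as a subgroup of the units of `Q →L[ℂ] Q`.  For `S = N₁` this is
`Iso_{N₁}(Q)`, for `S = N₂` it is `Iso_{N₂}(Q)`. -/
def equivUnits {Q : Type*} [SeminormedAddCommGroup Q] [NormedSpace ℂ Q]
    (σ : Representation ℂ N₂ Q) (S : Set N₂) : Subgroup (Q →L[ℂ] Q)ˣ where
  carrier := {θ | ∀ g ∈ S, ∀ q : Q, (θ : Q →L[ℂ] Q) (σ g q) = σ g ((θ : Q →L[ℂ] Q) q)}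
  one_mem' := by intro g hg q; rfl
  mul_mem' := by
    intro a b ha hb g hg q
    show ((a * b : (Q →L[ℂ] Q)ˣ) : Q →L[ℂ] Q) (σ g q) = _
    rw [Units.val_mul]
    calc ((a : Q →L[ℂ] Q) * b) (σ g q) = (a : Q →L[ℂ] Q) ((b : Q →L[ℂ] Q) (σ g q)) := rfl
      _ = (a : Q →L[ℂ] Q) (σ g ((b : Q →L[ℂ] Q) q)) := by rw [hb g hg q]
      _ = σ g ((a : Q →L[ℂ] Q) ((b : Q →L[ℂ] Q) q)) := by rw [ha g hg]
      _ = σ g (((a : Q →L[ℂ] Q) * b) q) := rfl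
  inv_mem' := by
    intro a ha g hg q
    have hinv1 : ∀ x : Q, (↑a⁻¹ : Q →L[ℂ] Q) ((↑a : Q →L[ℂ] Q) x) = x := by
      intro x
      have h := congrArg (fun f : Q →L[ℂ] Q => f x) a.inv_mul
      exact h
    have hinv2 : ∀ x : Q, (↑a : Q →L[ℂ] Q) ((↑a⁻¹ : Q →L[ℂ] Q) x) = x := by
      intro x
      have h := congrArg (fun f : Q →L[ℂ] Q => f x) a.mul_inv
      exact h
    have key : (↑a : Q →L[ℂ] Q) (σ g ((↑a⁻¹ : Q →L[ℂ] Q) q)) = σ g q := by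
      rw [ha g hg, hinv2]
    show (↑a⁻¹ : Q →L[ℂ] Q) (σ g q) = σ g ((↑a⁻¹ : Q →L[ℂ] Q) q)
    rw [← key, hinv1]

end Clutch

namespace Clutch

/-! ### Clutching maps and their quotients -/

section Bundle

variable {m : ℕ} {N₂ : Type*} [Group N₂] [MulAction N₂ (ZMod m)]
variable {V : Type*} [NormedAddCommGroup V] [NormedSpace ℂ V]
variable {ρ : Representation ℂ N₂ V} {F : ZMod m → Submodule ℂ V}

theorem fiber_induction (hF : DirectSum.IsInternal F) {p : V → Prop}
    (mem : ∀ j, ∀ v ∈ F j, p v) (hadd : ∀ v w, p v → p w → p (v + w)) (v : V) : p v := by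
  have hv : v ∈ iSup F := by rw [hF.submodule_iSup_eq_top]; trivial
  exact Submodule.iSup_induction F (motive := p) hv mem (mem 0 0 (F 0).zero_mem) hadd

theorem clm_ext_fiber {W : Type*} [SeminormedAddCommGroup W] [NormedSpace ℂ W]
    (hF : DirectSum.IsInternal F) {A B : V →L[ℂ] W}
    (h : ∀ j, ∀ v ∈ F j, A v = B v) : A = B := by
  ext v
  refine fiber_induction (p := fun v => A v = B v) hF h (fun v w hv hw => ?_) v
  simp only [map_add, hv, hw]

theorem rho_mem (hρF : ∀ (g : N₂) (j : ZMod m), (F j).map (ρ g) = F (g • j))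
    (g : N₂) {j : ZMod m} {v : V} (hv : v ∈ F j) : ρ g v ∈ F (g • j) :=
  hρF g j ▸ Submodule.mem_map_of_mem hv

theorem rho_inv_mem (hρF : ∀ (g : N₂) (j : ZMod m), (F j).map (ρ g) = F (g • j))
    (g : N₂) {j : ZMod m} {v : V} (hv : v ∈ F (g • j)) : ρ g⁻¹ v ∈ F j := by
  simpa using rho_mem hρF g⁻¹ hv

theorem rho_inv_self (g : N₂) (v : V) : ρ g⁻¹ (ρ g v) = v := by
  rw [← Module.End.mul_apply, ← map_mul]; simp

theorem rho_self_inv (g : N₂) (v : V) : ρ g (ρ g⁻¹ v) = v := by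
  rw [← Module.End.mul_apply, ← map_mul]; simp

/-- `T` is an endomorphism of the `N₂`-vector bundle `F`: it preserves every fiber and commutes
with the action of `N₂`. -/
def IsBundleEnd (ρ : Representation ℂ N₂ V) (F : ZMod m → Submodule ℂ V) (T : V →L[ℂ] V) : Prop :=
  (∀ j, ∀ v ∈ F j, T v ∈ F j) ∧ ∀ (g : N₂) (v : V), T (ρ g v) = ρ g (T v)

theorem pow_mem_fiber {Ψ : V →L[ℂ] V} (hΨ : IsPreclutch F Ψ) (k : ℕ) {j : ZMod m} {v : V}
    (hv : v ∈ F j) : (Ψ ^ k) v ∈ F (j + k) := by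
  induction k with
  | zero => simpa using hv
  | succ k ih =>
    rw [pow_succ', Nat.cast_succ, ← add_assoc]
    exact (hΨ _).mapsTo ih

theorem mkQ_map (F : ZMod m → Submodule ℂ V) (hF : DirectSum.IsInternal F) (Ψ : V →L[ℂ] V)
    (v : V) : (clutchSub F Ψ).mkQ (Ψ v) = (clutchSub F Ψ).mkQ v := by
  refine fiber_induction (p := fun v => (clutchSub F Ψ).mkQ (Ψ v) = (clutchSub F Ψ).mkQ v) hF
    (fun j u hu => ?_) (fun v w hv hw => ?_) v
  · refine ((Submodule.Quotient.eq _).2 ?_).symm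
    exact Submodule.subset_span ⟨j, u, hu, rfl⟩
  · simp only [map_add, hv, hw]

theorem mkQ_pow (hF : DirectSum.IsInternal F) (Ψ : V →L[ℂ] V) (k : ℕ) (v : V) :
    (clutchSub F Ψ).mkQ ((Ψ ^ k) v) = (clutchSub F Ψ).mkQ v := by
  induction k with
  | zero => simp
  | succ k ih =>
    rw [pow_succ']
    exact (mkQ_map F hF Ψ _).trans ih

variable [NeZero m]

theorem IsClutch.pow_eq_one {Ψ : V →L[ℂ] V} (hF : DirectSum.IsInternal F)
    (hΨ : IsClutch ρ F Ψ) : Ψ ^ m = 1 :=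
  clm_ext_fiber hF fun j v hv => hΨ.2.1 j v hv

theorem pow_val_add {M : Type*} [Monoid M] {x : M} (hx : x ^ m = 1) (a b : ZMod m) :
    x ^ (a + b).val = x ^ a.val * x ^ b.val := by
  rw [ZMod.val_add, ← pow_add, ← pow_eq_pow_mod _ hx]

theorem pow_val_one {M : Type*} [Monoid M] {x : M} (hx : x ^ m = 1) :
    x ^ (1 : ZMod m).val = x := by
  rw [ZMod.val_one_eq_one_mod, ← pow_eq_pow_mod _ hx, pow_one]

theorem pow_val_mem_fiber {Ψ : V →L[ℂ] V} (hΨ : IsPreclutch F Ψ) (k : ZMod m) {j : ZMod m}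
    {v : V} (hv : v ∈ F j) : (Ψ ^ k.val) v ∈ F (j + k) := by
  simpa using pow_mem_fiber hΨ k.val hv

/-- The full form of equivariance: `g` carries the transport `F i → F (i + k)` along a clutching
map to the transport `F (g • i) → F (g • (i + k))`. -/
theorem IsClutch.rho_pow {Ψ : V →L[ℂ] V} (hF : DirectSum.IsInternal F)
    (hρF : ∀ (g : N₂) (j : ZMod m), (F j).map (ρ g) = F (g • j))
    (hΨ : IsClutch ρ F Ψ) (g : N₂) {i : ZMod m} {v : V} (hv : v ∈ F i) (k : ZMod m) :
    ρ g ((Ψ ^ k.val) v) = (Ψ ^ (g • (i + k) - g • i).val) (ρ g v) := by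
  have h1 := hΨ.pow_eq_one hF
  suffices H : ∀ n : ℕ, ρ g ((Ψ ^ n) v) = (Ψ ^ (g • (i + (n : ZMod m)) - g • i).val) (ρ g v) by
    simpa using H k.val
  intro n
  induction n with
  | zero => simp
  | succ n ih =>
    have h2 := hΨ.2.2 g (g • (i + (n : ZMod m))) _
      (rho_mem hρF g (pow_mem_fiber hΨ.1 n hv))
    rw [rho_inv_self, inv_smul_smul, ih] at h2
    rw [pow_succ', mul_apply_eq_comp, ← h2, ← mul_apply_eq_comp,
      ← pow_val_add h1]
    congr 3
    push_cast
    ring_nf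

theorem mkQ_rho {Ψ : V →L[ℂ] V} (hF : DirectSum.IsInternal F)
    (hρF : ∀ (g : N₂) (j : ZMod m), (F j).map (ρ g) = F (g • j))
    (hΨ : IsClutch ρ F Ψ) (g : N₂) {v w : V}
    (h : (clutchSub F Ψ).mkQ v = (clutchSub F Ψ).mkQ w) :
    (clutchSub F Ψ).mkQ (ρ g v) = (clutchSub F Ψ).mkQ (ρ g w) := by
  have key : clutchSub F Ψ ≤ (clutchSub F Ψ).comap (ρ g) := by
    refine Submodule.span_le.2 ?_
    rintro _ ⟨j, u, hu, rfl⟩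
    have h1 := hΨ.rho_pow hF hρF g hu 1
    rw [pow_val_one (hΨ.pow_eq_one hF)] at h1
    have h2 := mkQ_pow hF Ψ (g • (j + 1) - g • j).val (ρ g u)
    rw [← h1] at h2
    simpa using (Submodule.Quotient.eq _).1 h2.symm
  have h3 := key ((Submodule.Quotient.eq _).1 h)
  refine (Submodule.Quotient.eq _).2 ?_
  simpa using h3

end Bundle

/-! ### The quotient map is an isomorphism on each fiber -/

section Splitting

variable {m : ℕ} [NeZero m] {V : Type*} [NormedAddCommGroup V] [NormedSpace ℂ V]
variable {Q : Type*} [SeminormedAddCommGroup Q] [NormedSpace ℂ Q]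

/-- Auxiliary maps witnessing that `F` is a direct sum decomposition of `V` and that `π : V → Q`
is an isomorphism on every fiber: `P j` is the projection of `V` onto `F j`, and `s j` is the
inverse of the restriction of `π` to `F j`. -/
structure Splitting (F : ZMod m → Submodule ℂ V) (π : V →L[ℂ] Q) where
  P : ZMod m → V →L[ℂ] V
  s : ZMod m → Q →L[ℂ] V
  P_mem : ∀ j v, P j v ∈ F j
  P_self : ∀ j, ∀ v ∈ F j, P j v = v
  P_ne : ∀ i j, i ≠ j → ∀ v ∈ F i, P j v = 0
  sum_P : ∀ v, ∑ j, P j v = v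
  s_mem : ∀ j q, s j q ∈ F j
  π_s : ∀ j q, π (s j q) = q
  s_π : ∀ j, ∀ v ∈ F j, s j (π v) = v

variable {F : ZMod m → Submodule ℂ V} {π : V →L[ℂ] Q}

theorem Splitting.inj (D : Splitting F π) {j : ZMod m} {v w : V} (hv : v ∈ F j) (hw : w ∈ F j)
    (h : π v = π w) : v = w := by
  rw [← D.s_π j v hv, h, D.s_π j w hw]

theorem exists_splitting [FiniteDimensional ℂ V] [FiniteDimensional ℂ Q] [T2Space Q]
    (hF : DirectSum.IsInternal F)
    (hπ : ∀ j, (∀ v ∈ F j, π v = 0 → v = 0) ∧ ∀ q, ∃ v ∈ F j, π v = q) :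
    Nonempty (Splitting F π) := by
  classical
  let _ := hF.chooseDecomposition
  let P : ZMod m → V →L[ℂ] V := fun j => LinearMap.toContinuousLinearMap
    ((F j).subtype ∘ₗ DirectSum.component ℂ (ZMod m) (fun i => F i) j ∘ₗ
      (DirectSum.decomposeLinearEquiv F).toLinearMap)
  have hP : ∀ j v, P j v = (DirectSum.decompose F v j : V) := fun j v => rfl
  have hbij : ∀ j, Function.Bijective ((π : V →ₗ[ℂ] Q).domRestrict (F j)) := by
    intro j
    refine ⟨(injective_iff_map_eq_zero _).2 fun v hv => Subtype.ext ((hπ j).1 v v.2 hv), ?_⟩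
    intro q
    obtain ⟨v, hv, h⟩ := (hπ j).2 q
    exact ⟨⟨v, hv⟩, h⟩
  let e := fun j => LinearEquiv.ofBijective _ (hbij j)
  have P_self : ∀ j, ∀ v ∈ F j, P j v = v := fun j v hv => by
    rw [hP, DirectSum.decompose_of_mem_same F hv]
  have P_ne : ∀ i j, i ≠ j → ∀ v ∈ F i, P j v = 0 := fun i j hij v hv => by
    rw [hP, DirectSum.decompose_of_mem_ne F hv hij]
  exact ⟨{
    P := P
    s := fun j => LinearMap.toContinuousLinearMap ((F j).subtype ∘ₗ (e j).symm.toLinearMap)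
    P_mem := fun j v => (DirectSum.decompose F v j).2
    P_self := P_self
    P_ne := P_ne
    sum_P := by
      refine fiber_induction hF (fun j v hv => ?_) (fun v w hv hw => ?_)
      · rw [Finset.sum_eq_single j, P_self j v hv]
        · exact fun i _ hij => P_ne j i hij.symm v hv
        · simp
      · simp only [map_add, Finset.sum_add_distrib, hv, hw]
    s_mem := fun j q => ((e j).symm q).2
    π_s := fun j q => (e j).apply_symm_apply q
    s_π := fun j v hv => congrArg Subtype.val ((e j).symm_apply_apply ⟨v, hv⟩) }⟩

/-- The quotient map `V → F/ψ` restricts to an isomorphism on every fiber.  Injectivity: the norm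
operator `∑_k ψ^k` kills the kernel, and its component in the original fiber is the identity. -/
theorem IsClutch.mkQ_fiber {N₂ : Type*} [Group N₂] [MulAction N₂ (ZMod m)]
    {ρ : Representation ℂ N₂ V}
    {Ψ : V →L[ℂ] V} (hF : DirectSum.IsInternal F) (hΨ : IsClutch ρ F Ψ) (j : ZMod m) :
    (∀ v ∈ F j, (clutchSub F Ψ).mkQ v = 0 → v = 0) ∧
      ∀ q, ∃ v ∈ F j, (clutchSub F Ψ).mkQ v = q := by
  classical
  have h1 := hΨ.pow_eq_one hF
  constructor
  · intro v hv h0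
    let A : V →L[ℂ] V := ∑ k : ZMod m, Ψ ^ k.val
    have hA : A * Ψ = A := by
      simp only [A, Finset.sum_mul]
      refine Fintype.sum_equiv (Equiv.addRight (1 : ZMod m)) _ _ fun k => ?_
      rw [Equiv.coe_addRight, pow_val_add h1, pow_val_one h1]
    have hker : clutchSub F Ψ ≤ LinearMap.ker (A : V →ₗ[ℂ] V) := by
      refine Submodule.span_le.2 ?_
      rintro _ ⟨j, u, hu, rfl⟩
      have : A (Ψ u) = A u := congrArg (fun B : V →L[ℂ] V => B u) hA
      simp [this]
    have hAv : A v = 0 := hker ((Submodule.Quotient.mk_eq_zero _).1 h0)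
    let _ := hF.chooseDecomposition
    have h2 : (DirectSum.decompose F (A v) j : V) = v := by
      simp only [A, sum_apply, DirectSum.decompose_sum]
      rw [DFinsupp.finsetSum_apply, AddSubmonoidClass.coe_finsetSum,
        Finset.sum_eq_single 0]
      · rw [ZMod.val_zero, pow_zero]
        exact DirectSum.decompose_of_mem_same F hv
      · intro k _ hk
        refine DirectSum.decompose_of_mem_ne F (pow_val_mem_fiber hΨ.1 k hv) ?_
        simpa using hk
      · simp
    rw [← h2, hAv]
    simp
  · intro q
    obtain ⟨v, rfl⟩ := Submodule.mkQ_surjective _ q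
    refine fiber_induction
      (p := fun v => ∃ w ∈ F j, (clutchSub F Ψ).mkQ w = (clutchSub F Ψ).mkQ v) hF
      (fun i u hu => ?_) (fun v w hv hw => ?_) v
    · refine ⟨(Ψ ^ (j - i).val) u, ?_, mkQ_pow hF Ψ _ u⟩
      simpa using pow_val_mem_fiber hΨ.1 (j - i) hu
    · obtain ⟨v', hv', ev⟩ := hv
      obtain ⟨w', hw', ew⟩ := hw
      exact ⟨v' + w', add_mem hv' hw', by rw [map_add, map_add, ev, ew]⟩

end Splitting

/-! ### Conjugation by bundle automorphisms, averaging, and lifting -/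

section Glue

variable {m : ℕ} [NeZero m] {N₂ : Type*} [Group N₂] [MulAction N₂ (ZMod m)]
variable {V : Type*} [NormedAddCommGroup V] [NormedSpace ℂ V]
variable {Q : Type*} [SeminormedAddCommGroup Q] [NormedSpace ℂ Q]
variable {ρ : Representation ℂ N₂ V} {F : ZMod m → Submodule ℂ V} {π : V →L[ℂ] Q}

theorem units_apply_inv (u : (V →L[ℂ] V)ˣ) (v : V) :
    (u : V →L[ℂ] V) ((↑u⁻¹ : V →L[ℂ] V) v) = v := by
  rw [← mul_apply_eq_comp, Units.mul_inv, one_apply_eq_self]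

theorem units_inv_apply (u : (V →L[ℂ] V)ˣ) (v : V) :
    (↑u⁻¹ : V →L[ℂ] V) ((u : V →L[ℂ] V) v) = v := by
  rw [← mul_apply_eq_comp, Units.inv_mul, one_apply_eq_self]

theorem Splitting.clm_ext (D : Splitting F π) {W : Type*} [SeminormedAddCommGroup W]
    [NormedSpace ℂ W] {A B : V →L[ℂ] W} (h : ∀ j, ∀ v ∈ F j, A v = B v) : A = B := by
  ext v
  rw [← D.sum_P v, map_sum, map_sum]
  exact Finset.sum_congr rfl fun j _ => h j _ (D.P_mem j v)

theorem Splitting.P_comm (D : Splitting F π) {T : V →L[ℂ] V} (hT : ∀ j, ∀ v ∈ F j, T v ∈ F j)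
    (j : ZMod m) (v : V) : D.P j (T v) = T (D.P j v) := by
  have h : D.P j * T = T * D.P j := D.clm_ext fun i v hv => by
    rw [mul_apply_eq_comp, mul_apply_eq_comp]
    rcases eq_or_ne i j with rfl | hij
    · rw [D.P_self _ _ hv, D.P_self _ _ (hT _ _ hv)]
    · rw [D.P_ne i j hij _ hv, D.P_ne i j hij _ (hT _ _ hv), map_zero]
  exact congrArg (fun B : V →L[ℂ] V => B v) h

theorem Splitting.isBundleEnd_inv (D : Splitting F π) {u : (V →L[ℂ] V)ˣ}
    (hu : IsBundleEnd ρ F u) : IsBundleEnd ρ F (↑u⁻¹ : V →L[ℂ] V) := by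
  have h1 := units_apply_inv u
  have h2 := units_inv_apply u
  refine ⟨fun j v hv => ?_, fun g v => ?_⟩
  · have h3 : D.P j ((↑u⁻¹ : V →L[ℂ] V) v) = (↑u⁻¹ : V →L[ℂ] V) v := by
      rw [← h2 (D.P j _), ← D.P_comm hu.1, h1, D.P_self _ _ hv]
    exact h3 ▸ D.P_mem j _
  · rw [← h2 (ρ g ((↑u⁻¹ : V →L[ℂ] V) v)), hu.2, h1]

theorem IsBundleEnd.mul {A B : V →L[ℂ] V} (hA : IsBundleEnd ρ F A) (hB : IsBundleEnd ρ F B) :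
    IsBundleEnd ρ F (A * B) :=
  ⟨fun j v hv => hA.1 j _ (hB.1 j v hv), fun g v => by
    rw [mul_apply_eq_comp, hB.2, hA.2, mul_apply_eq_comp]⟩

theorem IsClutch.conj {Ψ : V →L[ℂ] V} (hΨ : IsClutch ρ F Ψ) {u : (V →L[ℂ] V)ˣ}
    (hu : IsBundleEnd ρ F u) (hu' : IsBundleEnd ρ F (↑u⁻¹ : V →L[ℂ] V)) :
    IsClutch ρ F (u * Ψ * (↑u⁻¹ : V →L[ℂ] V)) := by
  have h1 := units_apply_inv u
  have h2 := units_inv_apply u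
  have bij : ∀ j, Set.BijOn (u : V →L[ℂ] V) (F j) (F j) := fun j =>
    ⟨hu.1 j, fun a _ b _ h => by rw [← h2 a, h, h2],
      fun a ha => ⟨_, hu'.1 j a ha, h1 a⟩⟩
  have bij' : ∀ j, Set.BijOn (↑u⁻¹ : V →L[ℂ] V) (F j) (F j) := fun j =>
    ⟨hu'.1 j, fun a _ b _ h => by rw [← h1 a, h, h1],
      fun a ha => ⟨_, hu.1 j a ha, h2 a⟩⟩
  refine ⟨fun j => (bij (j + 1)).comp ((hΨ.1 j).comp (bij' j)), fun j v hv => ?_,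
    fun g j v hv => ?_⟩
  · rw [Units.conj_pow, mul_apply_eq_comp, mul_apply_eq_comp,
      hΨ.2.1 j _ (hu'.1 j v hv), h1]
  · rw [Units.conj_pow, mul_apply_eq_comp, mul_apply_eq_comp,
      hΨ.2.2 g j _ (hu'.1 j v hv), hu.2, mul_apply_eq_comp, mul_apply_eq_comp, hu'.2]

theorem IsClutch.quotIso_conj (hF : DirectSum.IsInternal F)
    (hρF : ∀ (g : N₂) (j : ZMod m), (F j).map (ρ g) = F (g • j))
    {Ψ : V →L[ℂ] V} (hΨ : IsClutch ρ F Ψ) {u : (V →L[ℂ] V)ˣ}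
    (hu : IsBundleEnd ρ F u) (hu' : IsBundleEnd ρ F (↑u⁻¹ : V →L[ℂ] V)) :
    QuotIso ρ F Ψ (u * Ψ * (↑u⁻¹ : V →L[ℂ] V)) := by
  have h1 := units_apply_inv u
  have h2 := units_inv_apply u
  set Ψ' : V →L[ℂ] V := u * Ψ * (↑u⁻¹ : V →L[ℂ] V) with hΨ'
  have hle : clutchSub F Ψ ≤ (clutchSub F Ψ').comap (u : V →L[ℂ] V).toLinearMap := by
    refine Submodule.span_le.2 ?_
    rintro _ ⟨j, v, hv, rfl⟩
    refine Submodule.subset_span ⟨j, (u : V →L[ℂ] V) v, hu.1 j v hv, ?_⟩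
    simp [hΨ', h2]
  have hle' : clutchSub F Ψ' ≤
      (clutchSub F Ψ).comap (↑u⁻¹ : V →L[ℂ] V).toLinearMap := by
    refine Submodule.span_le.2 ?_
    rintro _ ⟨j, v, hv, rfl⟩
    refine Submodule.subset_span ⟨j, _, hu'.1 j v hv, ?_⟩
    simp [hΨ', h2]
  refine ⟨Submodule.mapQ _ _ _ hle, ?_, fun g v w h => ?_⟩
  · refine Function.bijective_iff_has_inverse.2 ⟨Submodule.mapQ _ _ _ hle', fun q => ?_,
      fun q => ?_⟩
    · obtain ⟨v, rfl⟩ := Submodule.mkQ_surjective _ q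
      exact congrArg (clutchSub F Ψ).mkQ (h2 v)
    · obtain ⟨v, rfl⟩ := Submodule.mkQ_surjective _ q
      exact congrArg (clutchSub F Ψ').mkQ (h1 v)
  · have h3 : (clutchSub F Ψ').mkQ ((u : V →L[ℂ] V) v) = (clutchSub F Ψ').mkQ w := h
    have h4 := mkQ_rho hF hρF (hΨ.conj hu hu') g h3
    rw [← h4, ← hu.2]
    rfl

/-- The bundle endomorphism `(1/m) ∑_k Φ^{-k} T Ψ^k`, obtained by averaging `T` over the cyclic
group generated by the clutching maps. -/
def average (T Ψ Φ : V →L[ℂ] V) : V →L[ℂ] V :=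
  (m : ℂ)⁻¹ • ∑ k : ZMod m, Φ ^ (-k).val * T * Ψ ^ k.val

theorem continuous_average (T Ψ : V →L[ℂ] V) : Continuous (average (m := m) T Ψ) := by
  unfold average
  fun_prop

theorem average_intertwines (T : V →L[ℂ] V) {Ψ Φ : V →L[ℂ] V} (hΨ : Ψ ^ m = 1)
    (hΦ : Φ ^ m = 1) : average (m := m) T Ψ Φ * Ψ = Φ * average (m := m) T Ψ Φ := by
  unfold average
  rw [smul_mul_assoc, mul_smul_comm, Finset.sum_mul, Finset.mul_sum]
  congr 1
  refine Fintype.sum_equiv (Equiv.addRight (1 : ZMod m)) _ _ fun k => ?_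
  have h1 : -k = 1 + -(k + 1) := by ring
  rw [Equiv.coe_addRight, pow_val_add hΨ, pow_val_one hΨ, h1, pow_val_add hΦ, pow_val_one hΦ]
  simp only [mul_assoc]

theorem average_eq_self {T Ψ Φ : V →L[ℂ] V} (hΨ : Ψ ^ m = 1) (h : T * Ψ = Φ * T) :
    average (m := m) T Ψ Φ = T := by
  have h1 : ∀ k : ZMod m, Φ ^ (-k).val * T * Ψ ^ k.val = T := fun k => by
    have h2 : SemiconjBy T Ψ Φ := h
    rw [← (h2.pow_right (-k).val).eq, mul_assoc, ← pow_val_add hΨ]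
    simp
  have hm : (m : ℂ) ≠ 0 := Nat.cast_ne_zero.2 (NeZero.ne m)
  simp only [average, h1, Finset.sum_const, Finset.card_univ, ZMod.card]
  rw [← Nat.cast_smul_eq_nsmul ℂ, inv_smul_smul₀ hm]

/-- The average commutes with `N₂`: on the fiber `F i`, conjugation by `g` permutes the summands
through the bijection `k ↦ g • (i + k) - g • i` of `ZMod m`. -/
theorem isBundleEnd_average (hF : DirectSum.IsInternal F)
    (hρF : ∀ (g : N₂) (j : ZMod m), (F j).map (ρ g) = F (g • j))
    {T Ψ Φ : V →L[ℂ] V} (hT : IsBundleEnd ρ F T)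
    (hΨ : IsClutch ρ F Ψ) (hΦ : IsClutch ρ F Φ) :
    IsBundleEnd ρ F (average (m := m) T Ψ Φ) := by
  have app : ∀ v, average (m := m) T Ψ Φ v =
      (m : ℂ)⁻¹ • ∑ k : ZMod m, (Φ ^ (-k).val) (T ((Ψ ^ k.val) v)) := fun v => by
    simp [average]
  constructor
  · intro j v hv
    rw [app]
    refine (F j).smul_mem _ (sum_mem fun k _ => ?_)
    have h1 := pow_val_mem_fiber hΦ.1 (-k) (hT.1 _ _ (pow_val_mem_fiber hΨ.1 k hv))
    simpa using h1
  · intro g v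
    refine fiber_induction
      (p := fun v => average (m := m) T Ψ Φ (ρ g v) = ρ g (average (m := m) T Ψ Φ v)) hF
      (fun i v hv => ?_) (fun v w hv hw => ?_) v
    · rw [app, app, map_smul, map_sum]
      congr 1
      let e : ZMod m ≃ ZMod m := ((Equiv.addLeft i).trans (MulAction.toPerm g)).trans
        (Equiv.subRight (g • i))
      refine (Fintype.sum_equiv e _ _ fun k => ?_).symm
      have he : e k = g • (i + k) - g • i := rfl
      have h1 := hΦ.rho_pow hF hρF g (hT.1 _ _ (pow_val_mem_fiber hΨ.1 k hv)) (-k)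
      rw [h1, ← hT.2, hΨ.rho_pow hF hρF g hv k, he, add_neg_cancel_right, neg_sub]
    · simp only [map_add, hv, hw]

/-- An isomorphism of the quotient representations lifts to a bundle automorphism intertwining
the clutching maps. -/
theorem exists_unit_of_quotIso [FiniteDimensional ℂ V] (hF : DirectSum.IsInternal F)
    (hρF : ∀ (g : N₂) (j : ZMod m), (F j).map (ρ g) = F (g • j))
    {Ψ Ψ' : V →L[ℂ] V} (hΨ : IsClutch ρ F Ψ) (hΨ' : IsClutch ρ F Ψ')
    (D : Splitting F (clutchSub F Ψ).mkQL) (D' : Splitting F (clutchSub F Ψ').mkQL)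
    (h : QuotIso ρ F Ψ Ψ') :
    ∃ u : (V →L[ℂ] V)ˣ, IsBundleEnd ρ F u ∧ (u : V →L[ℂ] V) * Ψ = Ψ' * u := by
  have : CompleteSpace V := FiniteDimensional.complete ℂ V
  have : IsClosed (clutchSub F Ψ : Set V) := Submodule.closed_of_finiteDimensional _
  obtain ⟨θ, hθ, hθρ⟩ := h
  let T : V →L[ℂ] V := ∑ j, D'.s j ∘L LinearMap.toContinuousLinearMap θ ∘L
    (clutchSub F Ψ).mkQL ∘L D.P j
  have hT : ∀ j, ∀ v ∈ F j, T v = D'.s j (θ ((clutchSub F Ψ).mkQ v)) := fun j v hv => by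
    simp only [T, sum_apply]
    rw [Finset.sum_eq_single j]
    · simp [D.P_self j v hv]
    · intro i _ hij
      simp [D.P_ne j i hij.symm v hv]
    · simp
  have hTF : ∀ j, ∀ v ∈ F j, T v ∈ F j := fun j v hv => by
    rw [hT j v hv]; exact D'.s_mem _ _
  have hTπ : ∀ v, (clutchSub F Ψ').mkQ (T v) = θ ((clutchSub F Ψ).mkQ v) := by
    refine fiber_induction hF (fun j v hv => ?_) (fun v w hv hw => ?_)
    · rw [hT j v hv]; simpa using D'.π_s j (θ ((clutchSub F Ψ).mkQ v))
    · simp only [map_add, hv, hw]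
  have hTρ : ∀ g v, T (ρ g v) = ρ g (T v) := fun g v => by
    refine fiber_induction (p := fun v => T (ρ g v) = ρ g (T v)) hF
      (fun j v hv => ?_) (fun v w hv hw => ?_) v
    · refine D'.inj (hTF _ _ (rho_mem hρF g hv)) (rho_mem hρF g (hTF _ _ hv)) ?_
      rw [Submodule.mkQL_apply, Submodule.mkQL_apply, hTπ]
      exact hθρ g v (T v) (hTπ v).symm
    · simp only [map_add, hv, hw]
  have hTΨ : T * Ψ = Ψ' * T := clm_ext_fiber hF fun j v hv => by
    refine D'.inj (hTF _ _ ((hΨ.1 j).mapsTo hv)) ((hΨ'.1 j).mapsTo (hTF _ _ hv)) ?_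
    rw [Submodule.mkQL_apply, Submodule.mkQL_apply]
    have h1 := congrArg θ (mkQ_map F hF Ψ v)
    exact (hTπ _).trans (h1.trans ((hTπ v).symm.trans (mkQ_map F hF Ψ' (T v)).symm))
  have hinj : Function.Injective T := by
    refine (injective_iff_map_eq_zero T).2 fun v hv => ?_
    rw [← D.sum_P v]
    refine Finset.sum_eq_zero fun j _ => ?_
    have h1 := hTπ (D.P j v)
    rw [← D.P_comm hTF, hv, map_zero, map_zero] at h1
    have h2 := hθ.1 (h1.symm.trans (map_zero θ).symm)
    refine D.inj (D.P_mem j v) (F j).zero_mem ?_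
    simpa using h2
  have hunit : IsUnit T := ContinuousLinearMap.isUnit_iff_bijective.2
    ⟨hinj, (LinearMap.injective_iff_surjective (f := (T : V →ₗ[ℂ] V))).1 hinj⟩
  exact ⟨hunit.unit, ⟨hTF, hTρ⟩, hTΨ⟩

end Glue

/-! ### Bundle endomorphisms and `N₁`-equivariant endomorphisms of the quotient -/

section Induction

variable {m : ℕ} [NeZero m] {N₂ : Type*} [Group N₂] [MulAction N₂ (ZMod m)]
variable {V : Type*} [NormedAddCommGroup V] [NormedSpace ℂ V]
variable {Q : Type*} [SeminormedAddCommGroup Q] [NormedSpace ℂ Q]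
variable {ρ : Representation ℂ N₂ V} {F : ZMod m → Submodule ℂ V} {π : V →L[ℂ] Q}

/-- The multiplicative map `θ ↦ T(θ)` from endomorphisms of `Q` to endomorphisms of `V`: on the
fiber `F j`, `T(θ)` is the conjugate of `γ_j θ γ_j⁻¹` by the isomorphism `π : F j → Q`.  Here
`S` is the representation on `Q`, and `γ_j` is to be chosen with `γ_j • 0 = j`. -/
def extendEnd (D : Splitting F π) (S : N₂ →* (Q →L[ℂ] Q)) (γ : ZMod m → N₂) :
    (Q →L[ℂ] Q) →* (V →L[ℂ] V) :=
  have app : ∀ (θ : Q →L[ℂ] Q) (j : ZMod m) (v : V), v ∈ F j →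
      (∑ i, D.s i ∘L (S (γ i) ∘L θ ∘L S (γ i)⁻¹) ∘L π ∘L D.P i) v =
        D.s j (S (γ j) (θ (S (γ j)⁻¹ (π v)))) := fun θ j v hv => by
    rw [sum_apply, Finset.sum_eq_single j]
    · simp [D.P_self j v hv]
    · intro i _ hij
      simp [D.P_ne j i hij.symm v hv]
    · simp
  have canc : ∀ (g : N₂) (q : Q), S g⁻¹ (S g q) = q := fun g q => by
    rw [← mul_apply_eq_comp, ← map_mul, inv_mul_cancel, map_one, one_apply_eq_self]
  have canc' : ∀ (g : N₂) (q : Q), S g (S g⁻¹ q) = q := fun g q => by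
    rw [← mul_apply_eq_comp, ← map_mul, mul_inv_cancel, map_one, one_apply_eq_self]
  { toFun := fun θ => ∑ i, D.s i ∘L (S (γ i) ∘L θ ∘L S (γ i)⁻¹) ∘L π ∘L D.P i
    map_one' := D.clm_ext fun j v hv => by
      rw [app _ j v hv, one_apply_eq_self, canc', D.s_π j v hv, one_apply_eq_self]
    map_mul' := fun θ θ' => D.clm_ext fun j v hv => by
      rw [mul_apply_eq_comp, app _ j v hv, app _ j v hv, app _ j _ (D.s_mem j _), D.π_s, canc,
        mul_apply_eq_comp] }

theorem extendEnd_def (D : Splitting F π) (S : N₂ →* (Q →L[ℂ] Q)) (γ : ZMod m → N₂)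
    (θ : Q →L[ℂ] Q) : extendEnd D S γ θ =
      ∑ i, D.s i ∘L (S (γ i) ∘L θ ∘L S (γ i)⁻¹) ∘L π ∘L D.P i := rfl

theorem continuous_extendEnd (D : Splitting F π) (S : N₂ →* (Q →L[ℂ] Q)) (γ : ZMod m → N₂) :
    Continuous (extendEnd D S γ) := by
  have h : ⇑(extendEnd D S γ) = fun θ : Q →L[ℂ] Q =>
      ∑ i, D.s i ∘L (S (γ i) ∘L θ ∘L S (γ i)⁻¹) ∘L π ∘L D.P i := rfl
  rw [h]
  fun_prop

variable (D : Splitting F π) {S : N₂ →* (Q →L[ℂ] Q)} {γ : ZMod m → N₂}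

theorem extendEnd_mem {θ : Q →L[ℂ] Q} {j : ZMod m} {v : V} (hv : v ∈ F j) :
    extendEnd D S γ θ v ∈ F j := by
  rw [extendEnd_def, sum_apply, Finset.sum_eq_single j]
  · exact D.s_mem j _
  · intro i _ hij
    simp [D.P_ne j i hij.symm v hv]
  · simp

theorem π_extendEnd (θ : Q →L[ℂ] Q) {j : ZMod m} {v : V} (hv : v ∈ F j) :
    π (extendEnd D S γ θ v) = (S (γ j) * θ * S (γ j)⁻¹) (π v) := by
  rw [extendEnd_def, sum_apply, Finset.sum_eq_single j]
  · simp [D.P_self j v hv, D.π_s]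
  · intro i _ hij
    simp [D.P_ne j i hij.symm v hv]
  · simp

theorem conj_eq {θ : Q →L[ℂ] Q}
    (hθ : ∀ g ∈ MulAction.stabilizer N₂ (0 : ZMod m), θ * S g = S g * θ) {a b : N₂}
    (hab : a • (0 : ZMod m) = b • (0 : ZMod m)) :
    S a * θ * S a⁻¹ = S b * θ * S b⁻¹ := by
  have h1 : b⁻¹ * a ∈ MulAction.stabilizer N₂ (0 : ZMod m) := by
    rw [MulAction.mem_stabilizer_iff, mul_smul, hab, inv_smul_smul]
  have h2 : S a = S b * S (b⁻¹ * a) := by rw [← map_mul, mul_inv_cancel_left]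
  rw [h2, mul_assoc (S b), ← hθ _ h1, mul_assoc, mul_assoc, mul_assoc, ← map_mul]
  simp

/-- The stabilizer of `0` acts on `Q` as it does on the fiber `F 0`, so an automorphism of `Q`
commuting with it is unchanged by conjugation with `γ` when `γ • 0 = 0`. -/
theorem conj_zero {θ : Q →L[ℂ] Q}
    (hθ : ∀ g ∈ MulAction.stabilizer N₂ (0 : ZMod m), θ * S g = S g * θ) {a : N₂}
    (ha : a • (0 : ZMod m) = 0) : S a * θ * S a⁻¹ = θ := by
  rw [conj_eq (b := 1) hθ (by simpa using ha)]
  simp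

/-- If `θ` commutes with the stabilizer of `0`, the conjugate `γ_j θ γ_j⁻¹` does not depend on the
choice of `γ_j`, and `T(θ)` is `N₂`-equivariant. -/
theorem isBundleEnd_extendEnd (hρF : ∀ (g : N₂) (j : ZMod m), (F j).map (ρ g) = F (g • j))
    (hS : ∀ g v, S g (π v) = π (ρ g v)) (hγ : ∀ j, γ j • (0 : ZMod m) = j) {θ : Q →L[ℂ] Q}
    (hθ : ∀ g ∈ MulAction.stabilizer N₂ (0 : ZMod m), θ * S g = S g * θ) :
    IsBundleEnd ρ F (extendEnd D S γ θ) := by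
  refine ⟨fun j v hv => extendEnd_mem D hv, fun g v => ?_⟩
  rw [← D.sum_P v]
  simp only [map_sum]
  refine Finset.sum_congr rfl fun j _ => ?_
  have hv := D.P_mem j v
  generalize D.P j v = v at hv
  refine D.inj (extendEnd_mem D (rho_mem hρF g hv)) (rho_mem hρF g (extendEnd_mem D hv)) ?_
  rw [π_extendEnd D θ (rho_mem hρF g hv), ← hS, ← hS, π_extendEnd D θ hv]
  have h1 : γ (g • j) • (0 : ZMod m) = (g * γ j) • (0 : ZMod m) := by
    rw [hγ, mul_smul, hγ]
  rw [conj_eq hθ h1]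
  simp only [← mul_apply_eq_comp, ← map_mul, mul_assoc]
  simp

/-- The map `F 0 → F 0` induced by a bundle endomorphism, transported to `Q`. -/
def restrictEnd (T : V →L[ℂ] V) : Q →L[ℂ] Q := π ∘L T ∘L D.s 0

theorem continuous_restrictEnd : Continuous (restrictEnd D) := by
  unfold restrictEnd
  fun_prop

theorem restrictEnd_one : restrictEnd D 1 = 1 := by
  ext q
  exact D.π_s 0 q

theorem restrictEnd_mul (A : V →L[ℂ] V) {B : V →L[ℂ] V} (hB : IsBundleEnd ρ F B) :
    restrictEnd D (A * B) = restrictEnd D A * restrictEnd D B := by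
  ext q
  have h := D.s_π 0 _ (hB.1 0 _ (D.s_mem 0 q))
  simp only [restrictEnd, mul_apply_eq_comp, ContinuousLinearMap.comp_apply, h]

theorem restrictEnd_comm (hρF : ∀ (g : N₂) (j : ZMod m), (F j).map (ρ g) = F (g • j))
    (hS : ∀ g v, S g (π v) = π (ρ g v)) {T : V →L[ℂ] V} (hT : IsBundleEnd ρ F T) :
    ∀ g ∈ MulAction.stabilizer N₂ (0 : ZMod m), restrictEnd D T * S g = S g * restrictEnd D T := by
  intro g hg
  ext q
  have h0 : ρ g (D.s 0 q) ∈ F 0 := by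
    simpa [MulAction.mem_stabilizer_iff.1 hg] using rho_mem hρF g (D.s_mem 0 q)
  have h1 : D.s 0 (S g q) = ρ g (D.s 0 q) := by
    rw [← D.s_π 0 _ h0, ← hS, D.π_s]
  simp only [restrictEnd, mul_apply_eq_comp, ContinuousLinearMap.comp_apply, h1, hS, hT.2]

theorem extendEnd_restrictEnd (hρF : ∀ (g : N₂) (j : ZMod m), (F j).map (ρ g) = F (g • j))
    (hS : ∀ g v, S g (π v) = π (ρ g v)) (hγ : ∀ j, γ j • (0 : ZMod m) = j) {T : V →L[ℂ] V}
    (hT : IsBundleEnd ρ F T) : extendEnd D S γ (restrictEnd D T) = T := by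
  refine D.clm_ext fun j v hv => D.inj (extendEnd_mem D hv) (hT.1 j v hv) ?_
  have h0 : ρ (γ j)⁻¹ v ∈ F 0 := rho_inv_mem hρF (γ j) (by rwa [hγ])
  rw [π_extendEnd D _ hv]
  simp only [restrictEnd, mul_apply_eq_comp, ContinuousLinearMap.comp_apply]
  rw [hS (γ j)⁻¹ v, D.s_π 0 _ h0, hT.2, hS, rho_self_inv]

theorem restrictEnd_extendEnd (hγ : ∀ j, γ j • (0 : ZMod m) = j) {θ : Q →L[ℂ] Q}
    (hθ : ∀ g ∈ MulAction.stabilizer N₂ (0 : ZMod m), θ * S g = S g * θ) :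
    restrictEnd D (extendEnd D S γ θ) = θ := by
  ext q
  simp only [restrictEnd, ContinuousLinearMap.comp_apply]
  rw [π_extendEnd D θ (D.s_mem 0 q), conj_zero hθ (hγ 0), D.π_s]

/-- `T(θ)` commutes with the clutching map exactly when `θ` is `N₂`-equivariant: commutation with
`Ψ` says that all the conjugates `γ_j θ γ_j⁻¹` coincide. -/
theorem extendEnd_comm_iff (hγ : ∀ j, γ j • (0 : ZMod m) = j) {Ψ : V →L[ℂ] V}
    (hΨ : IsPreclutch F Ψ) (hπ : ∀ v, π (Ψ v) = π v) {θ : Q →L[ℂ] Q}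
    (hθ : ∀ g ∈ MulAction.stabilizer N₂ (0 : ZMod m), θ * S g = S g * θ) :
    extendEnd D S γ θ * Ψ = Ψ * extendEnd D S γ θ ↔ ∀ g, θ * S g = S g * θ := by
  constructor
  · intro h
    have step : ∀ j : ZMod m, S (γ (j + 1)) * θ * S (γ (j + 1))⁻¹ =
        S (γ j) * θ * S (γ j)⁻¹ := fun j => by
      ext q
      have h1 := congrArg (fun A : V →L[ℂ] V => π (A (D.s j q))) h
      simp only [mul_apply_eq_comp] at h1
      rw [hπ, π_extendEnd D θ ((hΨ j).mapsTo (D.s_mem j q)), hπ, π_extendEnd D θ (D.s_mem j q),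
        D.π_s] at h1
      exact h1
    have all : ∀ n : ℕ, S (γ (n : ZMod m)) * θ * S (γ (n : ZMod m))⁻¹ = θ := fun n => by
      induction n with
      | zero => rw [Nat.cast_zero]; exact conj_zero hθ (hγ 0)
      | succ n ih => rw [Nat.cast_succ, step, ih]
    intro g
    have h1 : γ (((g • (0 : ZMod m)).val : ℕ) : ZMod m) • (0 : ZMod m) = g • (0 : ZMod m) := by
      rw [hγ, ZMod.natCast_zmod_val]
    have h2 : S g * θ * S g⁻¹ = θ := by rw [← conj_eq hθ h1, all]
    calc θ * S g = S g * θ * S g⁻¹ * S g := by rw [h2]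
      _ = S g * θ := by rw [mul_assoc, ← map_mul, inv_mul_cancel, map_one, mul_one]
  · intro h
    have hc : ∀ j, S (γ j) * θ * S (γ j)⁻¹ = θ := fun j => by
      rw [← h, mul_assoc, ← map_mul, mul_inv_cancel, map_one, mul_one]
    refine D.clm_ext fun j v hv => D.inj (extendEnd_mem D ((hΨ j).mapsTo hv))
      ((hΨ j).mapsTo (extendEnd_mem D hv)) ?_
    refine (π_extendEnd D θ ((hΨ j).mapsTo hv)).trans ?_
    rw [hc, mul_apply_eq_comp, hπ, hπ, π_extendEnd D θ hv, hc]

end Induction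

/-! ### Coset spaces as targets of open maps, and the main result -/

section Topology

/-- A continuous open surjection whose fibers are the left cosets of `H` identifies its target
with `G ⧸ H`. -/
theorem nonempty_homeomorph_quotient {G Y : Type*} [Group G] [TopologicalSpace G]
    [TopologicalSpace Y] (H : Subgroup G) (f : G → Y) (hc : Continuous f) (ho : IsOpenMap f)
    (hs : Function.Surjective f) (hk : ∀ a b, f a = f b ↔ a⁻¹ * b ∈ H) :
    Nonempty (Y ≃ₜ G ⧸ H) := by
  let φ : G ⧸ H → Y := Quotient.lift f fun a b hab =>
    (hk a b).2 (QuotientGroup.leftRel_apply.1 hab)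
  have hφ : IsHomeomorph φ := by
    refine ⟨hc.quotient_lift _, fun U hU => ?_, ?_, ?_⟩
    · have h1 : φ '' U = f '' (QuotientGroup.mk ⁻¹' U) := by
        ext y
        constructor
        · rintro ⟨q, hq, rfl⟩
          obtain ⟨a, rfl⟩ := QuotientGroup.mk_surjective q
          exact ⟨a, hq, rfl⟩
        · rintro ⟨a, ha, rfl⟩
          exact ⟨_, ha, rfl⟩
      rw [h1]
      exact ho _ (hU.preimage continuous_quot_mk)
    · intro p q hpq
      obtain ⟨a, rfl⟩ := QuotientGroup.mk_surjective p
      obtain ⟨b, rfl⟩ := QuotientGroup.mk_surjective q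
      exact QuotientGroup.eq.2 ((hk a b).1 hpq)
    · intro y
      obtain ⟨a, rfl⟩ := hs y
      exact ⟨QuotientGroup.mk a, rfl⟩
  exact ⟨hφ.homeomorph.symm⟩

end Topology

end Clutch

/-- Assume Condition F2 (`N₂` acts transitively on `x̄`, `m ≥ 2`).
For each equivariant pointwise clutching map `ψ`, the subset
`𝒜_ψ = {ψ' ∈ 𝒜 : F/ψ' ≅ F/ψ}` of `𝒜` is homeomorphic to the left coset space
`Iso_{N₁}(F/ψ) / Iso_{N₂}(F/ψ)` with its quotient topology, where `Iso_{N₁}(F/ψ)` is the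
topological group of `N₁`-equivariant linear automorphisms of `F/ψ` and `Iso_{N₂}(F/ψ)`
its subgroup of `N₂`-equivariant ones (the induced representation `σQ` on `F/ψ` being
characterized by commuting with the quotient map). -/
theorem statement13 {m : ℕ} [NeZero m] (hm : 2 ≤ m)
    {N₂ : Type*} [Group N₂] [MulAction N₂ (ZMod m)]
    {V : Type*} [NormedAddCommGroup V] [NormedSpace ℂ V] [FiniteDimensional ℂ V]
    (ρ : Representation ℂ N₂ V) (F : ZMod m → Submodule ℂ V)
    (hF : DirectSum.IsInternal F)
    (hρF : ∀ (g : N₂) (j : ZMod m), (F j).map (ρ g) = F (g • j))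
    (htrans : MulAction.IsPretransitive N₂ (ZMod m))
    (Ψ : V →L[ℂ] V) (hΨ : IsClutch ρ F Ψ)
    (σQ : Representation ℂ N₂ (V ⧸ clutchSub F Ψ))
    (hσQ : ∀ (g : N₂) (v : V),
      σQ g ((clutchSub F Ψ).mkQ v) = (clutchSub F Ψ).mkQ (ρ g v)) :
    Nonempty
      ({Ψ' : V →L[ℂ] V // IsClutch ρ F Ψ' ∧ QuotIso ρ F Ψ Ψ'} ≃ₜ
        (↥(Clutch.equivUnits σQ ((MulAction.stabilizer N₂ (0 : ZMod m) : Subgroup N₂) : Set N₂)) ⧸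
          (Clutch.equivUnits σQ (Set.univ : Set N₂)).subgroupOf
            (Clutch.equivUnits σQ
              ((MulAction.stabilizer N₂ (0 : ZMod m) : Subgroup N₂) : Set N₂)))) := by
  classical
  have : CompleteSpace V := FiniteDimensional.complete ℂ V
  have : IsClosed (clutchSub F Ψ : Set V) := Submodule.closed_of_finiteDimensional _
  obtain ⟨D⟩ := exists_splitting (π := (clutchSub F Ψ).mkQL) hF (hΨ.mkQ_fiber hF)
  let S : N₂ →* ((V ⧸ clutchSub F Ψ) →L[ℂ] (V ⧸ clutchSub F Ψ)) :=
    { toFun := fun g => LinearMap.toContinuousLinearMap (σQ g)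
      map_one' := by ext q; simp
      map_mul' := fun a b => by ext q; simp }
  have hS : ∀ g v, S g ((clutchSub F Ψ).mkQL v) = (clutchSub F Ψ).mkQL (ρ g v) := hσQ
  choose γ hγ using fun j : ZMod m => htrans.exists_smul_eq (0 : ZMod m) j
  have hΨ1 := hΨ.pow_eq_one hF
  have mem_iff : ∀ (N : Set N₂) (θ : ((V ⧸ clutchSub F Ψ) →L[ℂ] (V ⧸ clutchSub F Ψ))ˣ),
      θ ∈ Clutch.equivUnits σQ N ↔ ∀ g ∈ N, θ.1 * S g = S g * θ.1 := fun N θ =>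
    ⟨fun h g hg => ContinuousLinearMap.ext (h g hg),
      fun h g hg q => congrArg (fun A : _ →L[ℂ] _ => A q) (h g hg)⟩
  set G := Clutch.equivUnits σQ ((MulAction.stabilizer N₂ (0 : ZMod m) : Subgroup N₂) : Set N₂)
  have hcomm : ∀ θ : G, ∀ g ∈ MulAction.stabilizer N₂ (0 : ZMod m),
      θ.1.1 * S g = S g * θ.1.1 := fun θ => (mem_iff _ _).1 θ.2
  let u : G → (V →L[ℂ] V)ˣ := fun θ => Units.map (extendEnd D S γ) θ.1
  have hu : ∀ θ : G, IsBundleEnd ρ F (u θ) := fun θ =>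
    isBundleEnd_extendEnd D hρF hS hγ (hcomm θ)
  have hu' : ∀ θ : G, IsBundleEnd ρ F (↑(u θ)⁻¹ : V →L[ℂ] V) := fun θ => D.isBundleEnd_inv (hu θ)
  let f : G → {Ψ' : V →L[ℂ] V // IsClutch ρ F Ψ' ∧ QuotIso ρ F Ψ Ψ'} := fun θ =>
    ⟨u θ * Ψ * (↑(u θ)⁻¹ : V →L[ℂ] V), hΨ.conj (hu θ) (hu' θ),
      hΨ.quotIso_conj hF hρF (hu θ) (hu' θ)⟩
  -- `r` inverts `u`, so `G` is identified with the group of bundle automorphisms.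
  let r : {v : (V →L[ℂ] V)ˣ // IsBundleEnd ρ F v} → G := fun v =>
    ⟨⟨restrictEnd D v.1.1, restrictEnd D (↑v.1⁻¹ : V →L[ℂ] V),
      by rw [← restrictEnd_mul D _ (D.isBundleEnd_inv v.2), Units.mul_inv, restrictEnd_one],
      by rw [← restrictEnd_mul D _ v.2, Units.inv_mul, restrictEnd_one]⟩,
      (mem_iff _ _).2 (restrictEnd_comm D hρF hS v.2)⟩
  have hur : ∀ v, u (r v) = v.1 := fun v => Units.ext (extendEnd_restrictEnd D hρF hS hγ v.2)
  have hru : ∀ θ, r ⟨u θ, hu θ⟩ = θ := fun θ =>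
    Subtype.ext (Units.ext (restrictEnd_extendEnd D hγ (hcomm θ)))
  have hfr : ∀ (v : {v : (V →L[ℂ] V)ˣ // IsBundleEnd ρ F v}) y,
      v.1.1 * Ψ = y.1 * v.1.1 → f (r v) = y := fun v y h => by
    apply Subtype.ext
    change ((u (r v) : (V →L[ℂ] V)ˣ) : V →L[ℂ] V) * Ψ * (↑(u (r v))⁻¹ : V →L[ℂ] V) = y.1
    rw [hur, h, mul_assoc, Units.mul_inv, mul_one]
  have hrc : Continuous r := by
    refine Continuous.subtype_mk (Units.continuous_iff.2 ⟨?_, ?_⟩) _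
    · exact (continuous_restrictEnd D).comp (Units.continuous_val.comp continuous_subtype_val)
    · exact (continuous_restrictEnd D).comp (Units.continuous_coe_inv.comp continuous_subtype_val)
  refine nonempty_homeomorph_quotient _ f ?_ ?_ ?_ ?_
  · have hc := continuous_extendEnd D S γ
    refine Continuous.subtype_mk (Continuous.mul (Continuous.mul ?_ continuous_const) ?_) _
    · exact hc.comp (Units.continuous_val.comp continuous_subtype_val)
    · exact hc.comp (Units.continuous_coe_inv.comp continuous_subtype_val)
  · -- Near `f θ`, the average of `u θ` is an invertible bundle map intertwining `Ψ` with `y`; it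
    -- depends continuously on `y` and equals `u θ` at `y = f θ`, so it is a local section of `f`.
    refine IsOpenMap.of_nhds_le fun θ => ?_
    intro W hW
    have hW1 : r ⁻¹' (f ⁻¹' W) ∈ nhds (⟨u θ, hu θ⟩ : {v : (V →L[ℂ] V)ˣ // IsBundleEnd ρ F v}) := by
      refine hrc.continuousAt.preimage_mem_nhds ?_
      rw [hru]
      exact hW
    have hind : Topology.IsInducing
        (fun v : {v : (V →L[ℂ] V)ˣ // IsBundleEnd ρ F v} => (v.1.1 : V →L[ℂ] V)) :=
      Units.isOpenEmbedding_val.isInducing.comp Topology.IsInducing.subtypeVal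
    rw [hind.nhds_eq_comap] at hW1
    obtain ⟨O, hO, hOW⟩ := hW1
    let A : {Ψ' : V →L[ℂ] V // IsClutch ρ F Ψ' ∧ QuotIso ρ F Ψ Ψ'} → (V →L[ℂ] V) := fun y =>
      average (m := m) (u θ : V →L[ℂ] V) Ψ y.1
    have hAc : Continuous A := (continuous_average _ _).comp continuous_subtype_val
    have hA0 : A (f θ) = u θ := average_eq_self hΨ1 (by
      change _ = ((u θ : V →L[ℂ] V) * Ψ * (↑(u θ)⁻¹ : V →L[ℂ] V)) * (u θ : V →L[ℂ] V)
      rw [mul_assoc _ (↑(u θ)⁻¹ : V →L[ℂ] V), Units.inv_mul, mul_one])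
    have hA1 : ∀ᶠ y in nhds (f θ), A y ∈ O := hAc.continuousAt.preimage_mem_nhds (by rwa [hA0])
    have hA2 : ∀ᶠ y in nhds (f θ), IsUnit (A y) :=
      hAc.continuousAt.preimage_mem_nhds (Units.isOpen.mem_nhds (by rw [hA0]; exact (u θ).isUnit))
    filter_upwards [hA1, hA2] with y hy1 hy2
    obtain ⟨v, hv⟩ := hy2
    have hvB : IsBundleEnd ρ F (v : V →L[ℂ] V) := by
      rw [hv]; exact isBundleEnd_average hF hρF (hu θ) hΨ y.2.1
    have h1 : f (r ⟨v, hvB⟩) = y := hfr _ _ (by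
      change (v : V →L[ℂ] V) * Ψ = y.1 * v
      rw [hv]; exact average_intertwines _ hΨ1 (y.2.1.pow_eq_one hF))
    have h2 : f (r ⟨v, hvB⟩) ∈ W := hOW (show (v : V →L[ℂ] V) ∈ O by rw [hv]; exact hy1)
    rwa [h1] at h2
  · rintro ⟨Ψ', hΨ', hiso⟩
    have : IsClosed (clutchSub F Ψ' : Set V) := Submodule.closed_of_finiteDimensional _
    obtain ⟨D'⟩ := exists_splitting (π := (clutchSub F Ψ').mkQL) hF (hΨ'.mkQ_fiber hF)
    obtain ⟨v, hv, hvΨ⟩ := exists_unit_of_quotIso hF hρF hΨ hΨ' D D' hiso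
    exact ⟨r ⟨v, hv⟩, hfr _ _ hvΨ⟩
  · intro a b
    have hab : ((u (a⁻¹ * b) : (V →L[ℂ] V)ˣ) : V →L[ℂ] V) =
        (↑(u a)⁻¹ : V →L[ℂ] V) * (u b : V →L[ℂ] V) :=
      map_mul (extendEnd D S γ) _ _
    rw [Subgroup.mem_subgroupOf, mem_iff]
    have key := extendEnd_comm_iff D hγ hΨ.1 (mkQ_map F hF Ψ) (hcomm (a⁻¹ * b))
    have e1 : extendEnd D S γ (a⁻¹ * b : G).1.1 = ((u (a⁻¹ * b) : (V →L[ℂ] V)ˣ) : V →L[ℂ] V) := rfl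
    rw [e1, hab] at key
    simp only [Set.mem_univ, forall_const]
    rw [← key, Subtype.ext_iff]
    change (u a : V →L[ℂ] V) * Ψ * (↑(u a)⁻¹ : V →L[ℂ] V) =
      (u b : V →L[ℂ] V) * Ψ * (↑(u b)⁻¹ : V →L[ℂ] V) ↔ _
    rw [Units.eq_mul_inv_iff_mul_eq, mul_assoc, mul_assoc, ← Units.eq_inv_mul_iff_mul_eq,
      ← mul_assoc, eq_comm]
    simp only [mul_assoc]
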